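/- Let N ≥ 3 be an integer and let s be a real number with 1 < s < N. Then for every smooth function u : ℝ^N → ℝ with compact support, ∫_{ℝ^N} |u(x)|^s / ‖x‖^s dx ≤ (s/(N−s))^s · ∫_{ℝ^N} ‖∇u(x)‖^s dx. -/

import Mathlib

open MeasureTheory

/-!
If `u` is `C¹` and vanishes at infinity, integrating its derivative along the ray through `x` gives
`u x = - ∫ t in (1, ∞), Du (t x) x`, hence `‖u x‖ / ‖x‖ ≤ ∫ t in (1, ∞), ‖Du (t x)‖`.
By Minkowski's integral inequality the `L^s` norm of the right-hand side is at most
`∫ t in (1, ∞), ‖Du (t ·)‖_s`. In dimension `N` a dilation by `t` multiplies the `L^s` norm by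
`t ^ (-N / s)`, and `∫ t in (1, ∞), t ^ (-N / s) = s / (N - s)`.
-/

open Set Filter Module
open scoped ENNReal Topology

section Minkowski

variable {α β : Type*} [MeasurableSpace α] [MeasurableSpace β] {p : ℝ}

lemma lintegral_mul_rpow_le (μ : Measure α) {w f : α → ℝ≥0∞} (hw : Measurable w)
    (hf : Measurable f) (hp : 1 ≤ p) :
    (∫⁻ a, w a * f a ∂μ) ^ p ≤ (∫⁻ a, w a ∂μ) ^ (p - 1) * ∫⁻ a, w a * f a ^ p ∂μ := by
  have hp0 : 0 < p := zero_lt_one.trans_le hp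
  have holder := ENNReal.rpow_le_rpow (eLpNorm'_le_eLpNorm'_mul_rpow_measure_univ zero_lt_one hp
    (hf.aestronglyMeasurable (μ := μ.withDensity w))) hp0.le
  simp only [eLpNorm'_eq_lintegral_enorm, enorm_eq_self, ENNReal.rpow_one, div_one,
    withDensity_apply _ MeasurableSet.univ, Measure.restrict_univ] at holder
  rw [ENNReal.mul_rpow_of_nonneg _ _ hp0.le, ← ENNReal.rpow_mul, ← ENNReal.rpow_mul,
    one_div_mul_cancel hp0.ne', ENNReal.rpow_one, sub_mul, one_div_mul_cancel hp0.ne', one_mul,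
    mul_comm, lintegral_withDensity_eq_lintegral_mul _ hw hf,
    lintegral_withDensity_eq_lintegral_mul _ hw (hf.pow_const p)] at holder
  exact holder

variable {μ : Measure α} {ν : Measure β} [SFinite μ]

lemma lintegral_rpow_lintegral_mul_le [SFinite ν] {w : β → ℝ≥0∞} {f : β → α → ℝ≥0∞}
    (hw : Measurable w) (hf : Measurable (Function.uncurry f)) (hp : 1 ≤ p) :
    ∫⁻ x, (∫⁻ t, w t * f t x ∂ν) ^ p ∂μ
      ≤ (∫⁻ t, w t ∂ν) ^ (p - 1) * ∫⁻ t, w t * ∫⁻ x, f t x ^ p ∂μ ∂ν := by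
  have hmeas : Measurable (Function.uncurry fun x t ↦ w t * f t x ^ p) :=
    (hw.comp measurable_snd).mul ((hf.comp measurable_swap).pow_const p)
  calc ∫⁻ x, (∫⁻ t, w t * f t x ∂ν) ^ p ∂μ
      ≤ ∫⁻ x, (∫⁻ t, w t ∂ν) ^ (p - 1) * ∫⁻ t, w t * f t x ^ p ∂ν ∂μ :=
        lintegral_mono fun x ↦ lintegral_mul_rpow_le ν hw hf.of_uncurry_right hp
    _ = (∫⁻ t, w t ∂ν) ^ (p - 1) * ∫⁻ x, ∫⁻ t, w t * f t x ^ p ∂ν ∂μ :=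
        lintegral_const_mul _ hmeas.lintegral_prod_right'
    _ = (∫⁻ t, w t ∂ν) ^ (p - 1) * ∫⁻ t, w t * ∫⁻ x, f t x ^ p ∂μ ∂ν := by
        rw [lintegral_lintegral_swap hmeas.aemeasurable]
        simp_rw [lintegral_const_mul _ (hf.of_uncurry_left.pow_const p)]

lemma measurable_eLpNorm'_of_uncurry {f : β → α → ℝ≥0∞} (hf : Measurable (Function.uncurry f)) :
    Measurable fun t ↦ eLpNorm' (f t) p μ := by
  simp only [eLpNorm'_eq_lintegral_enorm, enorm_eq_self]
  exact (hf.pow_const p).lintegral_prod_right'.pow_const _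

lemma ae_ae_eq_zero_of_eLpNorm'_eq_zero [SFinite ν] {f : β → α → ℝ≥0∞}
    (hf : Measurable (Function.uncurry f)) (hp : 0 ≤ p) :
    ∀ᵐ x ∂μ, ∀ᵐ t ∂ν, eLpNorm' (f t) p μ = 0 → f t x = 0 := by
  refine (Measure.ae_ae_comm ?_).1 (.of_forall fun t ↦ ?_)
  · exact (measurableSet_eq_fun ((measurable_eLpNorm'_of_uncurry hf).comp measurable_fst)
      measurable_const).imp (measurableSet_eq_fun hf measurable_const)
  · rw [eventually_imp_distrib_left]
    exact ae_eq_zero_of_eLpNorm'_eq_zero hp hf.of_uncurry_left.aestronglyMeasurable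

-- Each slice is normalized to `f t / ‖f t‖_p`, and Jensen's inequality is applied with the weight
-- `t ↦ ‖f t‖_p`.
lemma eLpNorm'_lintegral_le_lintegral_eLpNorm' [SFinite ν] {f : β → α → ℝ≥0∞}
    (hf : Measurable (Function.uncurry f)) (hp : 1 ≤ p) :
    eLpNorm' (fun x ↦ ∫⁻ t, f t x ∂ν) p μ ≤ ∫⁻ t, eLpNorm' (f t) p μ ∂ν := by
  have hp0 : 0 < p := zero_lt_one.trans_le hp
  set c : β → ℝ≥0∞ := fun t ↦ eLpNorm' (f t) p μ
  have hc : Measurable c := measurable_eLpNorm'_of_uncurry hf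
  rcases eq_or_ne (∫⁻ t, c t ∂ν) ∞ with htop | hfin
  · simp [htop]
  have hnormalize : ∀ᵐ x ∂μ, ∫⁻ t, f t x ∂ν = ∫⁻ t, c t * (f t x / c t) ∂ν := by
    filter_upwards [ae_ae_eq_zero_of_eLpNorm'_eq_zero (ν := ν) hf hp0.le] with x hzero
    refine lintegral_congr_ae ?_
    filter_upwards [hzero, ae_lt_top hc hfin] with t ht ht_fin
    exact (ENNReal.mul_div_cancel' ht fun h ↦ absurd h ht_fin.ne).symm
  have hslice (t : β) : ∫⁻ x, (f t x / c t) ^ p ∂μ ≤ 1 := by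
    have hc_rpow : ∫⁻ x, f t x ^ p ∂μ = c t ^ p := by
      simpa using lintegral_rpow_enorm_eq_rpow_eLpNorm' (f := f t) (μ := μ) hp0
    simp_rw [ENNReal.div_rpow_of_nonneg _ _ hp0.le, div_eq_mul_inv]
    rw [lintegral_mul_const _ (hf.of_uncurry_left.pow_const p), hc_rpow, ← div_eq_mul_inv]
    exact ENNReal.div_self_le_one
  have hbound : ∫⁻ x, (∫⁻ t, f t x ∂ν) ^ p ∂μ ≤ (∫⁻ t, c t ∂ν) ^ p := by
    calc ∫⁻ x, (∫⁻ t, f t x ∂ν) ^ p ∂μ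
        = ∫⁻ x, (∫⁻ t, c t * (f t x / c t) ∂ν) ^ p ∂μ :=
          lintegral_congr_ae (hnormalize.mono fun x hx ↦ congrArg (· ^ p) hx)
      _ ≤ (∫⁻ t, c t ∂ν) ^ (p - 1) * ∫⁻ t, c t * ∫⁻ x, (f t x / c t) ^ p ∂μ ∂ν :=
          lintegral_rpow_lintegral_mul_le hc (hf.div (hc.comp measurable_fst)) hp
      _ ≤ (∫⁻ t, c t ∂ν) ^ (p - 1) * ∫⁻ t, c t ∂ν := by
          gcongr with t
          exact mul_le_of_le_one_right' (hslice t)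
      _ = (∫⁻ t, c t ∂ν) ^ p := by
          nth_rw 2 [← ENNReal.rpow_one (∫⁻ t, c t ∂ν)]
          rw [← ENNReal.rpow_add_of_nonneg _ _ (sub_nonneg.2 hp) zero_le_one, sub_add_cancel]
  rw [eLpNorm'_eq_lintegral_enorm]
  simpa only [enorm_eq_self, one_div, ENNReal.rpow_inv_le_iff hp0] using hbound

end Minkowski

lemma lintegral_Ioi_one_ofReal_rpow_neg {a : ℝ} (ha : 1 < a) :
    ∫⁻ t in Ioi (1 : ℝ), ENNReal.ofReal (t ^ (-a)) = ENNReal.ofReal (1 / (a - 1)) := by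
  rw [← ofReal_integral_eq_lintegral_ofReal (integrableOn_Ioi_rpow_of_lt (by linarith) one_pos)
    ((ae_restrict_mem measurableSet_Ioi).mono fun t ht ↦
      Real.rpow_nonneg (zero_le_one.trans ht.le) _), integral_Ioi_rpow_of_lt (by linarith) one_pos,
    Real.one_rpow, neg_div, ← div_neg]
  congr 2
  ring

lemma enorm_le_lintegral_Ioi_enorm_deriv {F : Type*} [NormedAddCommGroup F] [NormedSpace ℝ F]
    {f : ℝ → F} (hf : ContDiff ℝ 1 f) (hlim : Tendsto f atTop (𝓝 0)) (a : ℝ) :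
    ‖f a‖ₑ ≤ ∫⁻ t in Ioi a, ‖deriv f t‖ₑ := by
  have hdiff : Tendsto (fun b ↦ ‖f b - f a‖ₑ) atTop (𝓝 ‖f a‖ₑ) := by
    simpa using (hlim.sub_const (f a)).enorm
  refine le_of_tendsto hdiff ((eventually_ge_atTop a).mono fun b hab ↦ ?_)
  calc ‖f b - f a‖ₑ ≤ ∫⁻ t in Icc a b, ‖deriv f t‖ₑ :=
        enorm_sub_le_lintegral_deriv_of_contDiffOn_Icc hf.contDiffOn hab
    _ = ∫⁻ t in Ioc a b, ‖deriv f t‖ₑ := by rw [restrict_Ioc_eq_restrict_Icc]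
    _ ≤ ∫⁻ t in Ioi a, ‖deriv f t‖ₑ := lintegral_mono_set Ioc_subset_Ioi_self

lemma ofReal_norm_rpow {F : Type*} [NormedAddCommGroup F] {p : ℝ} (hp : 0 ≤ p) (y : F) :
    ENNReal.ofReal (‖y‖ ^ p) = ‖y‖ₑ ^ p := by
  rw [← ENNReal.ofReal_rpow_of_nonneg (norm_nonneg y) hp, ofReal_norm]

lemma integrable_and_integral_norm_rpow_le_of_eLpNorm'_le {α F G : Type*} [MeasurableSpace α]
    [NormedAddCommGroup F] [NormedAddCommGroup G] {μ : Measure α} {f : α → F} {g : α → G}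
    {C p : ℝ} (hf : AEStronglyMeasurable f μ) (hC : 0 ≤ C) (hp : 0 < p)
    (hfg : eLpNorm' f p μ ≤ ENNReal.ofReal C * eLpNorm' g p μ)
    (hg : Integrable (fun x ↦ ‖g x‖ ^ p) μ) :
    Integrable (fun x ↦ ‖f x‖ ^ p) μ ∧ ∫ x, ‖f x‖ ^ p ∂μ ≤ C ^ p * ∫ x, ‖g x‖ ^ p ∂μ := by
  have hle : ∫⁻ x, ENNReal.ofReal (‖f x‖ ^ p) ∂μ
      ≤ ENNReal.ofReal (C ^ p * ∫ x, ‖g x‖ ^ p ∂μ) := by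
    rw [ENNReal.ofReal_mul (by positivity), ofReal_integral_eq_lintegral_ofReal hg
      (.of_forall fun x ↦ by positivity), ← ENNReal.ofReal_rpow_of_nonneg hC hp.le]
    simp only [ofReal_norm_rpow hp.le, lintegral_rpow_enorm_eq_rpow_eLpNorm' hp]
    rw [← ENNReal.mul_rpow_of_nonneg _ _ hp.le]
    exact ENNReal.rpow_le_rpow hfg hp.le
  have hmeas : AEStronglyMeasurable (fun x ↦ ‖f x‖ ^ p) μ :=
    (hf.norm.aemeasurable.pow_const p).aestronglyMeasurable
  have hnonneg : 0 ≤ᵐ[μ] fun x ↦ ‖f x‖ ^ p := .of_forall fun x ↦ by positivity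
  refine ⟨⟨hmeas, (hasFiniteIntegral_iff_ofReal hnonneg).2
    (hle.trans_lt ENNReal.ofReal_lt_top)⟩, ?_⟩
  rw [integral_eq_lintegral_of_nonneg_ae hnonneg hmeas]
  exact ENNReal.toReal_le_of_le_ofReal
    (mul_nonneg (by positivity) (integral_nonneg fun x ↦ by positivity)) hle

section Hardy

variable {E F : Type*} [NormedAddCommGroup E] [NormedSpace ℝ E]
  [NormedAddCommGroup F] [NormedSpace ℝ F] {s : ℝ}

lemma enorm_le_enorm_mul_lintegral_enorm_fderiv_smul {u : E → F} (hu : ContDiff ℝ 1 u) {x : E}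
    (hlim : Tendsto (fun t : ℝ ↦ u (t • x)) atTop (𝓝 0)) :
    ‖u x‖ₑ ≤ ‖x‖ₑ * ∫⁻ t in Ioi (1 : ℝ), ‖fderiv ℝ u (t • x)‖ₑ := by
  have hderiv (t : ℝ) : deriv (fun t : ℝ ↦ u (t • x)) t = fderiv ℝ u (t • x) x := by
    have hray : HasDerivAt (fun t : ℝ ↦ t • x) x t := by
      simpa using (hasDerivAt_id t).smul_const x
    exact ((hu.differentiable one_ne_zero _).hasFDerivAt.comp_hasDerivAt t hray).deriv
  calc ‖u x‖ₑ = ‖u ((1 : ℝ) • x)‖ₑ := by rw [one_smul]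
    _ ≤ ∫⁻ t in Ioi (1 : ℝ), ‖fderiv ℝ u (t • x) x‖ₑ := by
      simpa only [hderiv] using enorm_le_lintegral_Ioi_enorm_deriv (f := fun t : ℝ ↦ u (t • x))
        (hu.comp (contDiff_id.smul contDiff_const)) hlim 1
    _ ≤ ∫⁻ t in Ioi (1 : ℝ), ‖x‖ₑ * ‖fderiv ℝ u (t • x)‖ₑ :=
      lintegral_mono fun t ↦ ((fderiv ℝ u (t • x)).le_opENorm x).trans_eq (mul_comm _ _)
    _ = ‖x‖ₑ * ∫⁻ t in Ioi (1 : ℝ), ‖fderiv ℝ u (t • x)‖ₑ :=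
      lintegral_const_mul' _ _ enorm_ne_top

lemma integrable_norm_fderiv_rpow_of_hasCompactSupport [MeasurableSpace E]
    [OpensMeasurableSpace E] {μ : Measure E} [IsFiniteMeasureOnCompacts μ] {u : E → F}
    (hu : ContDiff ℝ 1 u) (hsupp : HasCompactSupport u) (hs : 0 < s) :
    Integrable (fun x ↦ ‖fderiv ℝ u x‖ ^ s) μ := by
  have hcont : Continuous fun x ↦ ‖fderiv ℝ u x‖ ^ s :=
    (hu.continuous_fderiv one_ne_zero).norm.rpow_const fun _ ↦ Or.inr hs.le
  refine hcont.integrable_of_hasCompactSupport ?_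
  exact (hsupp.fderiv (𝕜 := ℝ)).comp_left (g := fun L : E →L[ℝ] F ↦ ‖L‖ ^ s) (by simp [hs.ne'])

variable [MeasurableSpace E] [BorelSpace E] [FiniteDimensional ℝ E]
  (μ : Measure E) [μ.IsAddHaarMeasure]

lemma lintegral_comp_smul {g : E → ℝ≥0∞} (hg : Measurable g) {t : ℝ} (ht : t ≠ 0) :
    ∫⁻ x, g (t • x) ∂μ = ENNReal.ofReal |(t ^ finrank ℝ E)⁻¹| * ∫⁻ x, g x ∂μ := by
  rw [← lintegral_map hg (measurable_const_smul t), Measure.map_addHaar_smul μ ht,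
    lintegral_smul_measure, smul_eq_mul]

lemma eLpNorm'_comp_smul {g : E → ℝ≥0∞} (hg : Measurable g) (hs : 0 ≤ s) {t : ℝ} (ht : 0 < t) :
    eLpNorm' (fun x ↦ g (t • x)) s μ
      = ENNReal.ofReal (t ^ (-(finrank ℝ E / s))) * eLpNorm' g s μ := by
  have hexp : |(t ^ finrank ℝ E)⁻¹| ^ (1 / s) = t ^ (-(finrank ℝ E / s)) := by
    rw [abs_of_pos (by positivity), ← Real.rpow_natCast, ← Real.rpow_neg ht.le,
      ← Real.rpow_mul ht.le, mul_one_div, neg_div]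
  simp only [eLpNorm'_eq_lintegral_enorm, enorm_eq_self]
  rw [lintegral_comp_smul μ (hg.pow_const s) ht.ne', ENNReal.mul_rpow_of_nonneg _ _ (by positivity),
    ENNReal.ofReal_rpow_of_nonneg (abs_nonneg _) (by positivity), hexp]

lemma eLpNorm'_lintegral_Ioi_comp_smul_le {g : E → ℝ≥0∞} (hg : Measurable g) (hs : 1 ≤ s)
    (hsE : s < finrank ℝ E) :
    eLpNorm' (fun x ↦ ∫⁻ t in Ioi (1 : ℝ), g (t • x)) s μ
      ≤ ENNReal.ofReal (s / (finrank ℝ E - s)) * eLpNorm' g s μ := by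
  have hs0 : 0 < s := zero_lt_one.trans_le hs
  calc eLpNorm' (fun x ↦ ∫⁻ t in Ioi (1 : ℝ), g (t • x)) s μ
      ≤ ∫⁻ t in Ioi (1 : ℝ), eLpNorm' (fun x ↦ g (t • x)) s μ :=
        eLpNorm'_lintegral_le_lintegral_eLpNorm'
          (f := fun (t : ℝ) x ↦ g (t • x)) (hg.comp measurable_smul) hs
    _ = ∫⁻ t in Ioi (1 : ℝ), ENNReal.ofReal (t ^ (-(finrank ℝ E / s))) * eLpNorm' g s μ :=
        setLIntegral_congr_fun measurableSet_Ioi fun t ht ↦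
          eLpNorm'_comp_smul μ hg hs0.le (zero_lt_one.trans ht)
    _ = ENNReal.ofReal (1 / (finrank ℝ E / s - 1)) * eLpNorm' g s μ := by
        rw [lintegral_mul_const _ (by fun_prop),
          lintegral_Ioi_one_ofReal_rpow_neg ((one_lt_div hs0).2 hsE)]
    _ = ENNReal.ofReal (s / (finrank ℝ E - s)) * eLpNorm' g s μ := by
        rw [div_sub_one hs0.ne', one_div_div]

theorem eLpNorm'_inv_norm_smul_le {u : E → F} (hu : ContDiff ℝ 1 u)
    (hlim : Tendsto u (cocompact E) (𝓝 0)) (hs : 1 ≤ s) (hsE : s < finrank ℝ E) :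
    eLpNorm' (fun x ↦ ‖x‖⁻¹ • u x) s μ
      ≤ ENNReal.ofReal (s / (finrank ℝ E - s)) * eLpNorm' (fderiv ℝ u) s μ := by
  have hray (x : E) : ‖‖x‖⁻¹ • u x‖ₑ ≤ ∫⁻ t in Ioi (1 : ℝ), ‖fderiv ℝ u (t • x)‖ₑ := by
    rcases eq_or_ne x 0 with rfl | hx
    · simp
    have hlim_ray : Tendsto (fun t : ℝ ↦ u (t • x)) atTop (𝓝 0) :=
      hlim.comp ((isClosedEmbedding_smul_left hx).tendsto_cocompact.mono_left atTop_le_cocompact)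
    rw [enorm_smul, enorm_inv (norm_ne_zero_iff.2 hx), enorm_norm, mul_comm, ← div_eq_mul_inv]
    exact ENNReal.div_le_of_le_mul' (enorm_le_enorm_mul_lintegral_enorm_fderiv_smul hu hlim_ray)
  calc eLpNorm' (fun x ↦ ‖x‖⁻¹ • u x) s μ
      ≤ eLpNorm' (fun x ↦ ∫⁻ t in Ioi (1 : ℝ), ‖fderiv ℝ u (t • x)‖ₑ) s μ :=
        eLpNorm'_mono_enorm_ae (zero_le_one.trans hs) (.of_forall hray)
    _ ≤ ENNReal.ofReal (s / (finrank ℝ E - s)) * eLpNorm' (fun x ↦ ‖fderiv ℝ u x‖ₑ) s μ :=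
        eLpNorm'_lintegral_Ioi_comp_smul_le μ
          (hu.continuous_fderiv one_ne_zero).enorm.measurable hs hsE
    _ = ENNReal.ofReal (s / (finrank ℝ E - s)) * eLpNorm' (fderiv ℝ u) s μ := by
        simp only [eLpNorm'_eq_lintegral_enorm, enorm_eq_self]

theorem hardy_inequality_constant_exponent_general {u : E → F} (hu : ContDiff ℝ 1 u)
    (hlim : Tendsto u (cocompact E) (𝓝 0)) (hs : 1 ≤ s) (hsE : s < finrank ℝ E)
    (hint : Integrable (fun x ↦ ‖fderiv ℝ u x‖ ^ s) μ) :
    Integrable (fun x ↦ ‖u x‖ ^ s / ‖x‖ ^ s) μ ∧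
      ∫ x, ‖u x‖ ^ s / ‖x‖ ^ s ∂μ
        ≤ (s / (finrank ℝ E - s)) ^ s * ∫ x, ‖fderiv ℝ u x‖ ^ s ∂μ := by
  have hquot (x : E) : ‖‖x‖⁻¹ • u x‖ ^ s = ‖u x‖ ^ s / ‖x‖ ^ s := by
    rw [norm_smul, norm_inv, norm_norm, inv_mul_eq_div,
      Real.div_rpow (norm_nonneg _) (norm_nonneg _)]
  have hmeas : AEStronglyMeasurable (fun x ↦ ‖x‖⁻¹ • u x) μ :=
    measurable_norm.inv.aestronglyMeasurable.smul hu.continuous.aestronglyMeasurable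
  simpa only [hquot] using integrable_and_integral_norm_rpow_le_of_eLpNorm'_le hmeas
    (div_nonneg (zero_le_one.trans hs) (sub_nonneg.2 hsE.le)) (zero_lt_one.trans_le hs)
    (eLpNorm'_inv_norm_smul_le μ hu hlim hs hsE) hint

end Hardy

/-- Constant-exponent Hardy inequality (Mitidieri's form): for `N ≥ 3`, `1 < s < N`,
and every smooth compactly supported `u : ℝ^N → ℝ`,
`∫ |u x|^s / ‖x‖^s dx ≤ (s/(N-s))^s * ∫ ‖∇u x‖^s dx`. -/
theorem hardy_inequality_constant_exponent
    (N : ℕ) (hN : 3 ≤ N) (s : ℝ) (hs1 : 1 < s) (hsN : s < N)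
    (u : EuclideanSpace ℝ (Fin N) → ℝ)
    (hu_smooth : ContDiff ℝ (⊤ : ℕ∞) u) (hu_supp : HasCompactSupport u) :
    ∫ x : EuclideanSpace ℝ (Fin N), |u x| ^ s / ‖x‖ ^ s
      ≤ (s / (N - s)) ^ s * ∫ x : EuclideanSpace ℝ (Fin N), ‖gradient u x‖ ^ s := by
  have hu : ContDiff ℝ 1 u := hu_smooth.of_le (mod_cast le_top)
  simpa [gradient] using (hardy_inequality_constant_exponent_general volume hu
    hu_supp.is_zero_at_infty hs1.le (by simpa using hsN)
    (integrable_norm_fderiv_rpow_of_hasCompactSupport hu hu_supp (zero_lt_one.trans hs1))).2
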